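/- Let B be an associative algebra over a field k of characteristic 0 and S ⊆ B a subset. Then for all k, k' ≥ 0 and ℓ, ℓ' ≥ 1 one has I_k^ℓ(B,S)·I_{k'}^{ℓ'}(B,S) ⊆ I_{k+k'}^{ℓ+ℓ'}(B,S) and [I_k^ℓ(B,S), I_{k'}^{ℓ'}(B,S)] ⊆ I_{k+k'+1}^{ℓ+ℓ'−1}(B,S); in particular S^(i)·I_k^ℓ(B,S) ⊆ I_{k+i}^{ℓ+1}(B,S) and [S^(i), I_k^ℓ(B,S)] ⊆ I_{k+i+1}^ℓ(B,S). -/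

import Mathlib

open Submodule TensorProduct

variable (K : Type*) [Field K]

/-- The span of all products `a * b`, `a ∈ S`, `b ∈ T` (the subspace `S·T`). -/
def pSpan {R : Type*} [NonUnitalRing R] [Module K R] (S T : Submodule K R) : Submodule K R :=
  Submodule.span K {x | ∃ a ∈ S, ∃ b ∈ T, x = a * b}

/-- The span of all commutators `a * b - b * a`, `a ∈ S`, `b ∈ T` (the subspace `[S, T]`). -/
def bSpan {R : Type*} [NonUnitalRing R] [Module K R] (S T : Submodule K R) : Submodule K R :=
  Submodule.span K {x | ∃ a ∈ S, ∃ b ∈ T, x = a * b - b * a}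

/-- The `k`-th commutator space `S^(k)`: `S^(0) = S`, `S^(k) = [S, S^(k-1)]`.
For `S = ⊤` this is the commutator space `F^(k)` of the algebra. -/
def cSp {R : Type*} [NonUnitalRing R] [Module K R] (S : Submodule K R) : ℕ → Submodule K R
  | 0 => S
  | (k+1) => bSpan K S (cSp S k)

/-- `IklS K S ℓ k` is `I_k^ℓ(R, S)`: the sum of `S^(λ₁) ⋯ S^(λ_ℓ)` over
`λ₁ + ⋯ + λ_ℓ = k`, defined via the recursion `I_k^1 = S^(k)`,
`I_k^ℓ = Σ_{0 ≤ i ≤ k} S^(i) · I_{k-i}^{ℓ-1}`.  The first argument is the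
superscript `ℓ`, the second the subscript `k`; the (unused) value at `ℓ = 0` is `⊥`.
For `S = ⊤` this is `I_k^ℓ(F)`. -/
def IklS {R : Type*} [NonUnitalRing R] [Module K R] (S : Submodule K R) :
    ℕ → ℕ → Submodule K R
  | 0, _ => ⊥
  | 1, k => cSp K S k
  | (ℓ+2), k => ∑ i ∈ Finset.range (k+1), pSpan K (cSp K S i) (IklS S (ℓ+1) (k-i))

/-- `I_k^{≤ℓ}(F) = Σ_{1 ≤ ℓ' ≤ ℓ} I_k^{ℓ'}(F)`. -/
def Ikle {R : Type*} [NonUnitalRing R] [Module K R] (ℓ k : ℕ) : Submodule K R :=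
  ∑ ℓ' ∈ Finset.Icc 1 ℓ, IklS K (⊤ : Submodule K R) ℓ' k

/-- `I_k(F) = Σ_{ℓ ≥ 1} I_k^ℓ(F)`. -/
def Ik (R : Type*) [NonUnitalRing R] [Module K R] (k : ℕ) : Submodule K R :=
  ⨆ ℓ : ℕ, IklS K (⊤ : Submodule K R) (ℓ + 1) k

/-- `g^n`: the span of all products of `n` elements of `g` (set to `⊥` for `n = 0`). -/
def gPow {R : Type*} [NonUnitalRing R] [Module K R] (g : Submodule K R) : ℕ → Submodule K R
  | 0 => ⊥
  | 1 => g
  | (n+2) => pSpan K g (gPow g (n+1))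

/-- The Lie subalgebra (under the commutator bracket) generated by a subspace `S`:
the smallest subspace containing `S` and closed under `(x, y) ↦ x * y - y * x`. -/
def lieGen {R : Type*} [NonUnitalRing R] [Module K R] (S : Submodule K R) : Submodule K R :=
  sInf {T | S ≤ T ∧ ∀ x ∈ T, ∀ y ∈ T, x * y - y * x ∈ T}

/-- The subspace `S ⊗ T` of `F ⊗[K] A`: the span of all pure tensors `f ⊗ a`
with `f ∈ S`, `a ∈ T`. -/
def tSpan {F A : Type*} [AddCommGroup F] [Module K F] [AddCommGroup A] [Module K A]
    (S : Submodule K F) (T : Submodule K A) : Submodule K (F ⊗[K] A) :=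
  Submodule.span K {z | ∃ f ∈ S, ∃ a ∈ T, z = f ⊗ₜ[K] a}

/-- The current Lie algebra `(g, A)(F)`: the Lie subalgebra of `F ⊗ A` (with the
commutator bracket) generated by `F ⊗ g`. -/
def currentLie {F A : Type*} [NonUnitalRing F] [Module K F] [SMulCommClass K F F]
    [IsScalarTower K F F] [Ring A] [Algebra K A] (g : Submodule K A) :
    Submodule K (F ⊗[K] A) :=
  lieGen K (tSpan K (⊤ : Submodule K F) g)

/-!
For each subspace `T`, bracketing with `T` is a derivation of the product and of the bracket of
subspaces:
`[PQ, T] ⊆ P[Q, T] + [P, T]Q` and `[[P, Q], T] ⊆ [P, [Q, T]] + [Q, [P, T]]`.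
The Jacobi form gives `[S^(i), S^(j)] ⊆ S^(i+j+1)` by induction on `i`. Every `I_k^ℓ` is a sum of
products `S^(i) · I_j^(ℓ-1)` with `i + j = k`, so the Leibniz form carries this inclusion first to
`[I_k^ℓ, S^(i)]` and then to `[I_k^ℓ, I_k'^ℓ']`, each time by induction on `ℓ`: a bracket merges two
factors into one and raises the total commutator degree by one.
-/

section SpanCalculus

variable {K} {R : Type*} [NonUnitalRing R] [Module K R] {P P' Q Q' T : Submodule K R}

theorem mul_mem_pSpan {a b : R} (ha : a ∈ P) (hb : b ∈ Q) : a * b ∈ pSpan K P Q :=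
  subset_span ⟨a, ha, b, hb, rfl⟩

theorem commutator_mem_bSpan {a b : R} (ha : a ∈ P) (hb : b ∈ Q) :
    a * b - b * a ∈ bSpan K P Q :=
  subset_span ⟨a, ha, b, hb, rfl⟩

theorem pSpan_mono (hP : P ≤ P') (hQ : Q ≤ Q') : pSpan K P Q ≤ pSpan K P' Q' :=
  span_mono fun _ ⟨a, ha, b, hb, hx⟩ ↦ ⟨a, hP ha, b, hQ hb, hx⟩

theorem bSpan_mono (hP : P ≤ P') (hQ : Q ≤ Q') : bSpan K P Q ≤ bSpan K P' Q' :=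
  span_mono fun _ ⟨a, ha, b, hb, hx⟩ ↦ ⟨a, hP ha, b, hQ hb, hx⟩

theorem bSpan_comm (P Q : Submodule K R) : bSpan K P Q = bSpan K Q P := by
  suffices ∀ P Q : Submodule K R, bSpan K P Q ≤ bSpan K Q P from (this P Q).antisymm (this Q P)
  refine fun P Q ↦ span_le.2 ?_
  rintro _ ⟨a, ha, b, hb, rfl⟩
  rw [← neg_sub]
  exact neg_mem (commutator_mem_bSpan hb ha)

variable [SMulCommClass K R R] [IsScalarTower K R R]

theorem pSpan_eq_map₂ (P Q : Submodule K R) : pSpan K P Q = map₂ (LinearMap.mul K R) P Q := by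
  simp only [pSpan, map₂_eq_span_image2, Set.image2, SetLike.mem_coe, LinearMap.mul_apply', eq_comm]

theorem bSpan_eq_map₂ (P Q : Submodule K R) :
    bSpan K P Q = map₂ (LinearMap.mul K R - (LinearMap.mul K R).flip) P Q := by
  simp only [bSpan, map₂_eq_span_image2, Set.image2, SetLike.mem_coe, LinearMap.sub_apply,
    LinearMap.flip_apply, LinearMap.mul_apply', eq_comm]

theorem pSpan_iSup_left {ι : Sort*} (P : ι → Submodule K R) (Q : Submodule K R) :
    pSpan K (⨆ i, P i) Q = ⨆ i, pSpan K (P i) Q := by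
  simp only [pSpan_eq_map₂, map₂_iSup_left]

theorem bSpan_iSup_left {ι : Sort*} (P : ι → Submodule K R) (Q : Submodule K R) :
    bSpan K (⨆ i, P i) Q = ⨆ i, bSpan K (P i) Q := by
  simp only [bSpan_eq_map₂, map₂_iSup_left]

theorem pSpan_span_left_le {s : Set R} :
    pSpan K (span K s) Q ≤ T ↔ ∀ a ∈ s, ∀ b ∈ Q, a * b ∈ T := by
  rw [pSpan_eq_map₂, ← span_eq Q, map₂_span_span, span_le, Set.image2_subset_iff, span_eq]
  rfl

theorem bSpan_span_left_le {s : Set R} :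
    bSpan K (span K s) Q ≤ T ↔ ∀ a ∈ s, ∀ b ∈ Q, a * b - b * a ∈ T := by
  rw [bSpan_eq_map₂, ← span_eq Q, map₂_span_span, span_le, Set.image2_subset_iff, span_eq]
  rfl

theorem pSpan_pSpan_le (P Q T : Submodule K R) :
    pSpan K (pSpan K P Q) T ≤ pSpan K P (pSpan K Q T) := by
  refine pSpan_span_left_le.2 ?_
  rintro _ ⟨a, ha, b, hb, rfl⟩ c hc
  rw [mul_assoc]
  exact mul_mem_pSpan ha (mul_mem_pSpan hb hc)

theorem bSpan_pSpan_le (P Q T : Submodule K R) :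
    bSpan K (pSpan K P Q) T ≤ pSpan K P (bSpan K Q T) ⊔ pSpan K (bSpan K P T) Q := by
  refine bSpan_span_left_le.2 ?_
  rintro _ ⟨a, ha, b, hb, rfl⟩ c hc
  have leibniz : a * b * c - c * (a * b) = a * (b * c - c * b) + (a * c - c * a) * b := by
    noncomm_ring
  rw [leibniz]
  exact add_mem_sup (mul_mem_pSpan ha (commutator_mem_bSpan hb hc))
    (mul_mem_pSpan (commutator_mem_bSpan ha hc) hb)

theorem bSpan_bSpan_le (P Q T : Submodule K R) :
    bSpan K (bSpan K P Q) T ≤ bSpan K P (bSpan K Q T) ⊔ bSpan K Q (bSpan K P T) := by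
  refine bSpan_span_left_le.2 ?_
  rintro _ ⟨a, ha, b, hb, rfl⟩ c hc
  have jacobi : (a * b - b * a) * c - c * (a * b - b * a) =
      (a * (b * c - c * b) - (b * c - c * b) * a) -
        (b * (a * c - c * a) - (a * c - c * a) * b) := by
    noncomm_ring
  rw [jacobi, sub_eq_add_neg]
  exact add_mem_sup (commutator_mem_bSpan ha (commutator_mem_bSpan hb hc))
    (neg_mem (commutator_mem_bSpan hb (commutator_mem_bSpan ha hc)))

end SpanCalculus

section Filtration

open Finset.HasAntidiagonal (antidiagonal mem_antidiagonal)

variable {K} {R : Type*} [NonUnitalRing R] [Module K R] (S : Submodule K R)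

theorem IklS_add_two (ℓ k : ℕ) :
    IklS K S (ℓ + 2) k =
      ⨆ p ∈ antidiagonal k, pSpan K (cSp K S p.1) (IklS K S (ℓ + 1) p.2) := by
  rw [IklS, ← Finset.Nat.sum_antidiagonal_eq_sum_range_succ
    (fun i j ↦ pSpan K (cSp K S i) (IklS K S (ℓ + 1) j)), ← Finset.sup_eq_iSup]
  -- `+` and `0` on submodules are `⊔` and `⊥`, so `∑` unfolds to `Finset.sup`
  rfl

theorem pSpan_cSp_IklS_le (i k ℓ : ℕ) :
    pSpan K (cSp K S i) (IklS K S (ℓ + 1) k) ≤ IklS K S (ℓ + 2) (i + k) := by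
  rw [IklS_add_two]
  exact le_iSup₂_of_le (i, k) (mem_antidiagonal.2 rfl) le_rfl

variable [SMulCommClass K R R] [IsScalarTower K R R]

theorem pSpan_IklS_add_two_le_iff {ℓ k : ℕ} {Q T : Submodule K R} :
    pSpan K (IklS K S (ℓ + 2) k) Q ≤ T ↔
      ∀ i j, i + j = k → pSpan K (pSpan K (cSp K S i) (IklS K S (ℓ + 1) j)) Q ≤ T := by
  simp only [IklS_add_two, pSpan_iSup_left, iSup_le_iff, mem_antidiagonal, Prod.forall]

theorem bSpan_IklS_add_two_le_iff {ℓ k : ℕ} {Q T : Submodule K R} :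
    bSpan K (IklS K S (ℓ + 2) k) Q ≤ T ↔
      ∀ i j, i + j = k → bSpan K (pSpan K (cSp K S i) (IklS K S (ℓ + 1) j)) Q ≤ T := by
  simp only [IklS_add_two, bSpan_iSup_left, iSup_le_iff, mem_antidiagonal, Prod.forall]

theorem bSpan_cSp_le (i j : ℕ) : bSpan K (cSp K S i) (cSp K S j) ≤ cSp K S (i + j + 1) := by
  induction i generalizing j with
  | zero => rw [Nat.zero_add, cSp, cSp]
  | succ i ih =>
    calc bSpan K (bSpan K S (cSp K S i)) (cSp K S j)
        ≤ bSpan K S (bSpan K (cSp K S i) (cSp K S j)) ⊔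
            bSpan K (cSp K S i) (cSp K S (j + 1)) := bSpan_bSpan_le _ _ _
      _ ≤ cSp K S (i + j + 2) ⊔ cSp K S (i + (j + 1) + 1) :=
        sup_le_sup (bSpan_mono le_rfl (ih j)) (ih (j + 1))
      _ = cSp K S (i + 1 + j + 1) := by
        rw [← add_assoc, sup_idem, add_right_comm i 1 j]

theorem pSpan_IklS_le (ℓ ℓ' k k' : ℕ) :
    pSpan K (IklS K S (ℓ + 1) k) (IklS K S (ℓ' + 1) k') ≤ IklS K S (ℓ + ℓ' + 2) (k + k') := by
  induction ℓ generalizing k with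
  | zero => rw [Nat.zero_add, Nat.zero_add]; exact pSpan_cSp_IklS_le S k k' ℓ'
  | succ ℓ ih =>
    rw [pSpan_IklS_add_two_le_iff]
    rintro i j rfl
    calc pSpan K (pSpan K (cSp K S i) (IklS K S (ℓ + 1) j)) (IklS K S (ℓ' + 1) k')
        ≤ pSpan K (cSp K S i) (pSpan K (IklS K S (ℓ + 1) j) (IklS K S (ℓ' + 1) k')) :=
          pSpan_pSpan_le _ _ _
      _ ≤ pSpan K (cSp K S i) (IklS K S (ℓ + ℓ' + 2) (j + k')) := pSpan_mono le_rfl (ih j)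
      _ ≤ IklS K S (ℓ + ℓ' + 3) (i + (j + k')) := pSpan_cSp_IklS_le S _ _ _
      _ = IklS K S (ℓ + 1 + ℓ' + 2) (i + j + k') := by congr 1 <;> omega

theorem bSpan_IklS_cSp_le (ℓ k i : ℕ) :
    bSpan K (IklS K S (ℓ + 1) k) (cSp K S i) ≤ IklS K S (ℓ + 1) (k + i + 1) := by
  induction ℓ generalizing k with
  | zero => exact bSpan_cSp_le S k i
  | succ ℓ ih =>
    rw [bSpan_IklS_add_two_le_iff]
    rintro p q rfl
    calc bSpan K (pSpan K (cSp K S p) (IklS K S (ℓ + 1) q)) (cSp K S i)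
        ≤ pSpan K (cSp K S p) (bSpan K (IklS K S (ℓ + 1) q) (cSp K S i)) ⊔
            pSpan K (bSpan K (cSp K S p) (cSp K S i)) (IklS K S (ℓ + 1) q) :=
          bSpan_pSpan_le _ _ _
      _ ≤ pSpan K (cSp K S p) (IklS K S (ℓ + 1) (q + i + 1)) ⊔
            pSpan K (cSp K S (p + i + 1)) (IklS K S (ℓ + 1) q) :=
          sup_le_sup (pSpan_mono le_rfl (ih q)) (pSpan_mono (bSpan_cSp_le S p i) le_rfl)
      _ ≤ IklS K S (ℓ + 2) (p + (q + i + 1)) ⊔ IklS K S (ℓ + 2) (p + i + 1 + q) :=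
          sup_le_sup (pSpan_cSp_IklS_le S _ _ _) (pSpan_cSp_IklS_le S _ _ _)
      _ = IklS K S (ℓ + 2) (p + q + i + 1) := by
          rw [show p + i + 1 + q = p + (q + i + 1) by omega, sup_idem]
          congr 1; omega

theorem bSpan_cSp_IklS_le (i k ℓ : ℕ) :
    bSpan K (cSp K S i) (IklS K S (ℓ + 1) k) ≤ IklS K S (ℓ + 1) (k + i + 1) :=
  (bSpan_comm _ _).trans_le (bSpan_IklS_cSp_le S ℓ k i)

theorem bSpan_IklS_le (ℓ ℓ' k k' : ℕ) :
    bSpan K (IklS K S (ℓ + 1) k) (IklS K S (ℓ' + 1) k') ≤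
      IklS K S (ℓ + ℓ' + 1) (k + k' + 1) := by
  induction ℓ generalizing k with
  | zero =>
    rw [Nat.zero_add, Nat.zero_add, add_comm k k']
    exact bSpan_cSp_IklS_le S k k' ℓ'
  | succ ℓ ih =>
    rw [bSpan_IklS_add_two_le_iff]
    rintro p q rfl
    calc bSpan K (pSpan K (cSp K S p) (IklS K S (ℓ + 1) q)) (IklS K S (ℓ' + 1) k')
        ≤ pSpan K (cSp K S p) (bSpan K (IklS K S (ℓ + 1) q) (IklS K S (ℓ' + 1) k')) ⊔
            pSpan K (bSpan K (cSp K S p) (IklS K S (ℓ' + 1) k')) (IklS K S (ℓ + 1) q) :=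
          bSpan_pSpan_le _ _ _
      _ ≤ pSpan K (cSp K S p) (IklS K S (ℓ + ℓ' + 1) (q + k' + 1)) ⊔
            pSpan K (IklS K S (ℓ' + 1) (k' + p + 1)) (IklS K S (ℓ + 1) q) :=
          sup_le_sup (pSpan_mono le_rfl (ih q))
            (pSpan_mono (bSpan_cSp_IklS_le S p k' ℓ') le_rfl)
      _ ≤ IklS K S (ℓ + ℓ' + 2) (p + (q + k' + 1)) ⊔
            IklS K S (ℓ' + ℓ + 2) (k' + p + 1 + q) :=
          sup_le_sup (pSpan_cSp_IklS_le S _ _ _) (pSpan_IklS_le S _ _ _ _)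
      _ = IklS K S (ℓ + 1 + ℓ' + 1) (p + q + k' + 1) := by
          rw [show k' + p + 1 + q = p + (q + k' + 1) by omega, add_comm ℓ' ℓ, sup_idem]
          congr 1 <;> omega

end Filtration

theorem statement11_general {K : Type*} [Field K]
    {B : Type*} [NonUnitalRing B] [Module K B] [SMulCommClass K B B] [IsScalarTower K B B]
    (S : Submodule K B) (k k' ℓ ℓ' : ℕ) (hℓ : 1 ≤ ℓ) (hℓ' : 1 ≤ ℓ') :
    pSpan K (IklS K S ℓ k) (IklS K S ℓ' k') ≤ IklS K S (ℓ + ℓ') (k + k') ∧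
    bSpan K (IklS K S ℓ k) (IklS K S ℓ' k') ≤ IklS K S (ℓ + ℓ' - 1) (k + k' + 1) ∧
    (∀ i : ℕ, pSpan K (cSp K S i) (IklS K S ℓ k) ≤ IklS K S (ℓ + 1) (k + i)) ∧
    (∀ i : ℕ, bSpan K (cSp K S i) (IklS K S ℓ k) ≤ IklS K S ℓ (k + i + 1)) := by
  obtain ⟨l, rfl⟩ := Nat.exists_eq_add_of_le' hℓ
  obtain ⟨l', rfl⟩ := Nat.exists_eq_add_of_le' hℓ'
  refine ⟨?_, ?_, fun i ↦ ?_, fun i ↦ bSpan_cSp_IklS_le S i k l⟩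
  · rw [show l + 1 + (l' + 1) = l + l' + 2 by omega]
    exact pSpan_IklS_le S l l' k k'
  · rw [show l + 1 + (l' + 1) - 1 = l + l' + 1 by omega]
    exact bSpan_IklS_le S l l' k k'
  · rw [add_comm k i]
    exact pSpan_cSp_IklS_le S i k l

/-- products and commutators of the subspaces `I_k^ℓ(B, S)` for a
subset `S` of an algebra `B` (where `S^(0) = span S`). -/
theorem statement11 {K : Type*} [Field K] [CharZero K]
    {B : Type*} [NonUnitalRing B] [Module K B] [SMulCommClass K B B] [IsScalarTower K B B]
    (S : Set B) (k k' ℓ ℓ' : ℕ) (hℓ : 1 ≤ ℓ) (hℓ' : 1 ≤ ℓ') :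
    pSpan K (IklS K (Submodule.span K S) ℓ k) (IklS K (Submodule.span K S) ℓ' k') ≤
      IklS K (Submodule.span K S) (ℓ + ℓ') (k + k') ∧
    bSpan K (IklS K (Submodule.span K S) ℓ k) (IklS K (Submodule.span K S) ℓ' k') ≤
      IklS K (Submodule.span K S) (ℓ + ℓ' - 1) (k + k' + 1) ∧
    (∀ i : ℕ, pSpan K (cSp K (Submodule.span K S) i) (IklS K (Submodule.span K S) ℓ k) ≤
      IklS K (Submodule.span K S) (ℓ + 1) (k + i)) ∧
    (∀ i : ℕ, bSpan K (cSp K (Submodule.span K S) i) (IklS K (Submodule.span K S) ℓ k) ≤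
      IklS K (Submodule.span K S) ℓ (k + i + 1)) :=
  statement11_general (Submodule.span K S) k k' ℓ ℓ' hℓ hℓ'
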